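/- Let U be a unitary on the n-qubit Hilbert space (ℂ²)^{⊗n} and let ε₁,…,εₙ ≥ 0. For each i ∈ {1,…,n} and P ∈ {X,Y,Z}, let Ô_{i,P} be a 2^n × 2^n complex matrix such that Σ_{P∈{X,Y,Z}} ‖Ô_{i,P} − U† P_i U‖∞ ≤ ε_i. On the doubled system define W̃_i := (1/2) I⊗I + (1/2) Σ_{P∈{X,Y,Z}} P_i ⊗ Ô_{i,P}, where P_i acts on qubit i of the first register and Ô_{i,P} acts on the second register. For each i, let W_i be any unitary on the doubled system that minimizes the operator-norm distance to W̃_i, i.e. ‖W_i − W̃_i‖∞ ≤ ‖B − W̃_i‖∞ for every unitary B. Then ‖S · Wₙ Wₙ₋₁ ⋯ W₁ − U† ⊗ U‖∞ ≤ Σ_{i=1}^n ε_i. -/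

import Mathlib

/-!
Write `V i = (1 ⊗ U†) Sᵢ (1 ⊗ U)`. The Pauli expansion `Sᵢ = ½ (1 ⊗ 1 + Σ_P Pᵢ ⊗ Pᵢ)`
(`qubitSwap_eq`) gives `V i = ½ (1 ⊗ 1 + Σ_P Pᵢ ⊗ U† Pᵢ U)`, so `W̃ᵢ` differs from the unitary `V i`
by at most `εᵢ / 2`, because `‖Pᵢ ⊗ A‖ ≤ ‖A‖` (`norm_kronecker_le_of_unitary`). Minimality of `W i`,
tested against `B = V i`, and the triangle inequality then give `‖W i - V i‖ ≤ εᵢ`.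

Products of unitaries accumulate errors additively (`norm_prod_sub_prod_le`). The product of the
`V i` telescopes to `(1 ⊗ U†) (∏ Sᵢ) (1 ⊗ U) = (1 ⊗ U†) S (1 ⊗ U)`, and
`S (1 ⊗ U†) S (1 ⊗ U) = (U† ⊗ 1)(1 ⊗ U) = U† ⊗ U`. Left multiplication by the unitary `S` preserves
the norm, which yields the bound.

The operator norm is handled through the C⋆-algebra structure on matrices given by
`Matrix.Norms.L2Operator`.
-/

open Matrix
open Kronecker

noncomputable section

/-- Operators on the `n`-qubit Hilbert space `(ℂ²)^{⊗n}`, as matrices indexed by bitstrings. -/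
abbrev QOp (n : ℕ) := Matrix (Fin n → Fin 2) (Fin n → Fin 2) ℂ

/-- Operators on the doubled system `((ℂ²)^{⊗n}) ⊗ ((ℂ²)^{⊗n})` of two `n`-qubit registers. -/
abbrev DOp (n : ℕ) :=
  Matrix ((Fin n → Fin 2) × (Fin n → Fin 2)) ((Fin n → Fin 2) × (Fin n → Fin 2)) ℂ

/-- The single-qubit Pauli `X` matrix. -/
def X2 : Matrix (Fin 2) (Fin 2) ℂ := !![0, 1; 1, 0]

/-- The single-qubit Pauli `Y` matrix. -/
def Y2 : Matrix (Fin 2) (Fin 2) ℂ := !![0, -Complex.I; Complex.I, 0]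

/-- The single-qubit Pauli `Z` matrix. -/
def Z2 : Matrix (Fin 2) (Fin 2) ℂ := !![1, 0; 0, -1]

/-- The three Pauli matrices `X, Y, Z`. -/
def pauli : Fin 3 → Matrix (Fin 2) (Fin 2) ℂ := ![X2, Y2, Z2]

/-- The `n`-qubit operator acting as the single-qubit operator `M` on qubit `i`
and as the identity on all other qubits. -/
def localOp {n : ℕ} (M : Matrix (Fin 2) (Fin 2) ℂ) (i : Fin n) : QOp n :=
  Matrix.of fun a b => ∏ j, if j = i then M (a j) (b j) else (if a j = b j then 1 else 0)

/-- The global swap unitary `S` on the doubled system, mapping `|a⟩⊗|b⟩` to `|b⟩⊗|a⟩`. -/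
def regSwap (n : ℕ) : DOp n :=
  Matrix.of fun p q => if p.1 = q.2 ∧ p.2 = q.1 then 1 else 0

/-- The unitary `Sᵢ` swapping qubit `i` of the first register with qubit `i` of the
second register of the doubled system. -/
def qubitSwap (n : ℕ) (i : Fin n) : DOp n :=
  Matrix.of fun p q =>
    if p.1 = Function.update q.1 i (q.2 i) ∧ p.2 = Function.update q.2 i (q.1 i) then 1 else 0

/-- The operator norm (largest singular value) `‖·‖∞` of a square complex matrix,
via its action on Euclidean space. -/
def opNorm {m : Type*} [Fintype m] [DecidableEq m] (A : Matrix m m ℂ) : ℝ :=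
  ‖Matrix.toEuclideanCLM (𝕜 := ℂ) A‖

open scoped Matrix.Norms.L2Operator

lemma opNorm_eq_norm {m : Type*} [Fintype m] [DecidableEq m] (A : Matrix m m ℂ) :
    opNorm A = ‖A‖ := rfl

/-! ### Norm estimates -/

/-- Errors add up in products of unitaries: replacing the factors one at a time, the untouched
factors on both sides are isometric. -/
lemma norm_prod_sub_prod_le {R ι : Type*} [NormedRing R] [StarRing R] [CStarRing R]
    (W V : ι → R) (ε : ι → ℝ) (hW : ∀ i, W i ∈ unitary R) (hV : ∀ i, V i ∈ unitary R)
    (h : ∀ i, ‖W i - V i‖ ≤ ε i) (l : List ι) :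
    ‖(l.map W).prod - (l.map V).prod‖ ≤ (l.map ε).sum := by
  induction l with
  | nil => simp
  | cons i l ih =>
    simp only [List.map_cons, List.prod_cons, List.sum_cons]
    have hVl : (l.map V).prod ∈ unitary R :=
      Submonoid.list_prod_mem _ (by simpa using fun i _ => hV i)
    have e : W i * (l.map W).prod - V i * (l.map V).prod
        = (W i - V i) * (l.map V).prod + W i * ((l.map W).prod - (l.map V).prod) := by
      noncomm_ring
    rw [e]
    refine (norm_add_le _ _).trans (add_le_add ?_ ?_)
    · rw [CStarRing.norm_mul_mem_unitary _ hVl]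
      exact h i
    · rw [CStarRing.norm_mem_unitary_mul _ (hW i)]
      exact ih

section Kronecker

variable {m : Type*} [Fintype m] [DecidableEq m]

/-- The embedding `B ↦ 1 ⊗ B` as a ⋆-homomorphism; being one between C⋆-algebras, it is
norm-nonincreasing. -/
def oneKronecker (m : Type*) [Fintype m] [DecidableEq m] :
    Matrix m m ℂ →⋆ₐ[ℂ] Matrix (m × m) (m × m) ℂ where
  toFun B := (1 : Matrix m m ℂ) ⊗ₖ B
  map_one' := one_kronecker_one
  map_mul' A B := by rw [← mul_kronecker_mul, one_mul]
  map_zero' := kronecker_zero _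
  map_add' A B := kronecker_add _ _ _
  commutes' r := by
    simp [Algebra.algebraMap_eq_smul_one, kronecker_smul]
  map_star' A := by
    simp [star_eq_conjTranspose, conjTranspose_kronecker]

lemma norm_one_kronecker_le (B : Matrix m m ℂ) : ‖(1 : Matrix m m ℂ) ⊗ₖ B‖ ≤ ‖B‖ :=
  NonUnitalStarAlgHom.norm_apply_le (oneKronecker m) B

lemma norm_kronecker_le_of_unitary {A : Matrix m m ℂ} (hA : A ∈ unitaryGroup m ℂ)
    (B : Matrix m m ℂ) : ‖A ⊗ₖ B‖ ≤ ‖B‖ := by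
  have e : A ⊗ₖ B = (A ⊗ₖ (1 : Matrix m m ℂ)) * ((1 : Matrix m m ℂ) ⊗ₖ B) := by
    rw [← mul_kronecker_mul, one_mul, mul_one]
  have hu : A ⊗ₖ (1 : Matrix m m ℂ) ∈ unitaryGroup (m × m) ℂ :=
    kronecker_mem_unitary hA (one_mem (unitaryGroup m ℂ))
  rw [e, CStarRing.norm_mem_unitary_mul _ hu]
  exact norm_one_kronecker_le B

end Kronecker

/-! ### Local Pauli operators -/

lemma localOp_apply {n : ℕ} (M : Matrix (Fin 2) (Fin 2) ℂ) (i : Fin n) (a b : Fin n → Fin 2) :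
    localOp M i a b = if ∀ j, j ≠ i → a j = b j then M (a i) (b i) else 0 := by
  simp only [localOp, of_apply]
  rw [← Finset.mul_prod_erase _ _ (Finset.mem_univ i), if_pos rfl]
  split_ifs with h
  · rw [Finset.prod_eq_one, mul_one]
    intro j hj
    have hj' := Finset.ne_of_mem_erase hj
    simp [hj', h j hj']
  · push Not at h
    obtain ⟨j, hj, hab⟩ := h
    rw [Finset.prod_eq_zero (i := j), mul_zero]
    · simp [hj]
    · simp [hj, hab]

lemma localOp_one {n : ℕ} (i : Fin n) : localOp 1 i = (1 : QOp n) := by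
  ext a b
  simp only [localOp, of_apply, one_apply, ite_self]
  rw [Finset.prod_ite_zero]
  simp [funext_iff]

lemma localOp_mul {n : ℕ} (M N : Matrix (Fin 2) (Fin 2) ℂ) (i : Fin n) :
    localOp M i * localOp N i = localOp (M * N) i := by
  ext a b
  simp only [mul_apply, localOp, of_apply, ← Finset.prod_mul_distrib]
  rw [← Fintype.prod_sum (fun j x => (if j = i then M (a j) x else if a j = x then 1 else 0)
    * (if j = i then N x (b j) else if x = b j then 1 else 0))]
  refine Finset.prod_congr rfl fun j _ => ?_
  split_ifs <;> simp_all

lemma localOp_conjTranspose {n : ℕ} (M : Matrix (Fin 2) (Fin 2) ℂ) (i : Fin n) :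
    (localOp M i)ᴴ = localOp Mᴴ i := by
  ext a b
  simp only [conjTranspose_apply, localOp_apply, eq_comm (a := b _)]
  split_ifs <;> simp

lemma localOp_mem_unitary {n : ℕ} {M : Matrix (Fin 2) (Fin 2) ℂ}
    (hM : M ∈ unitaryGroup (Fin 2) ℂ) (i : Fin n) :
    localOp M i ∈ unitaryGroup (Fin n → Fin 2) ℂ := by
  rw [mem_unitaryGroup_iff, star_eq_conjTranspose] at *
  rw [localOp_conjTranspose, localOp_mul, hM, localOp_one]

lemma pauli_mem_unitary (p : Fin 3) : pauli p ∈ unitaryGroup (Fin 2) ℂ := by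
  rw [mem_unitaryGroup_iff, star_eq_conjTranspose]
  fin_cases p <;> ext a b <;> fin_cases a <;> fin_cases b <;>
    simp [pauli, X2, Y2, Z2, mul_apply, Fin.sum_univ_two]

/-- Completeness of the Pauli basis: the single-qubit swap is `½ (1 ⊗ 1 + Σ_P P ⊗ P)`. -/
lemma pauli_completeness (a b c d : Fin 2) :
    (1 / 2 : ℂ) * ((1 : Matrix (Fin 2) (Fin 2) ℂ) a b * (1 : Matrix (Fin 2) (Fin 2) ℂ) c d)
      + (1 / 2 : ℂ) * ∑ p : Fin 3, pauli p a b * pauli p c d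
      = if a = d ∧ c = b then 1 else 0 := by
  fin_cases a <;> fin_cases b <;> fin_cases c <;> fin_cases d <;>
    simp [pauli, X2, Y2, Z2, Fin.sum_univ_three] <;> norm_num

lemma qubitSwap_eq (n : ℕ) (i : Fin n) :
    qubitSwap n i = (1 / 2 : ℂ) • ((1 : QOp n) ⊗ₖ (1 : QOp n))
      + (1 / 2 : ℂ) • ∑ p : Fin 3, localOp (pauli p) i ⊗ₖ localOp (pauli p) i := by
  ext ⟨a, c⟩ ⟨b, d⟩
  rw [← localOp_one i]
  have key := pauli_completeness (a i) (b i) (c i) (d i)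
  simp only [qubitSwap, of_apply, Matrix.add_apply, Matrix.smul_apply, Matrix.sum_apply,
    kronecker_apply, smul_eq_mul, localOp_apply, Function.eq_update_iff]
  by_cases h1 : ∀ j, j ≠ i → a j = b j
  · by_cases h2 : ∀ j, j ≠ i → c j = d j
    · simp only [if_pos h1, if_pos h2, key]
      congr 1
      simp +contextual [h1, h2]
    · simp only [if_neg h2, mul_zero, Finset.sum_const_zero, add_zero]
      rw [if_neg (fun h => h2 h.2.2)]
  · simp only [if_neg h1, zero_mul, mul_zero, Finset.sum_const_zero, add_zero]
    rw [if_neg (fun h => h1 h.1.2)]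

/-! ### Swaps -/

/-- The 0-1 matrix of a map `f` on basis labels, sending `|q⟩` to `|f q⟩`. -/
def mapMatrix {α : Type*} [DecidableEq α] (f : α → α) : Matrix α α ℂ :=
  of fun p q => if p = f q then 1 else 0

lemma mapMatrix_mul {α : Type*} [Fintype α] [DecidableEq α] (f g : α → α) :
    mapMatrix f * mapMatrix g = mapMatrix (f ∘ g) := by
  ext p q
  simp [mapMatrix, mul_apply]

lemma mapMatrix_id {α : Type*} [DecidableEq α] : mapMatrix (id : α → α) = 1 := by
  ext p q
  simp [mapMatrix, one_apply]

lemma mapMatrix_mem_unitary {α : Type*} [Fintype α] [DecidableEq α] {f : α → α}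
    (hf : Function.Involutive f) : mapMatrix f ∈ unitaryGroup α ℂ := by
  have hs : star (mapMatrix f) = mapMatrix f := by
    ext p q
    simp only [mapMatrix, star_apply, of_apply, ← hf.eq_iff (x := q), eq_comm (a := p)]
    split_ifs <;> simp
  rw [mem_unitaryGroup_iff, hs, mapMatrix_mul, hf.comp_self, mapMatrix_id]

/-- The action on basis labels of swapping the qubits listed in `l` between the registers. -/
def swapOn {n : ℕ} (l : List (Fin n)) (q : (Fin n → Fin 2) × (Fin n → Fin 2)) :
    (Fin n → Fin 2) × (Fin n → Fin 2) :=
  (fun j => if j ∈ l then q.2 j else q.1 j, fun j => if j ∈ l then q.1 j else q.2 j)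

lemma swapOn_involutive {n : ℕ} (l : List (Fin n)) : Function.Involutive (swapOn l) := by
  intro q
  ext j <;> by_cases h : j ∈ l <;> simp [swapOn, h]

lemma qubitSwap_eq_mapMatrix (n : ℕ) (i : Fin n) : qubitSwap n i = mapMatrix (swapOn [i]) := by
  ext p q
  simp only [qubitSwap, mapMatrix, of_apply, Prod.ext_iff, swapOn, List.mem_singleton]
  congr 3 <;> (ext j; rw [Function.update_apply]; split_ifs <;> simp_all)

lemma regSwap_eq_mapMatrix (n : ℕ) : regSwap n = mapMatrix Prod.swap := by
  ext p q
  simp [regSwap, mapMatrix, Prod.ext_iff]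

lemma prod_qubitSwap {n : ℕ} (l : List (Fin n)) (hl : l.Nodup) :
    (l.map (qubitSwap n)).prod = mapMatrix (swapOn l) := by
  induction l with
  | nil =>
    have : swapOn ([] : List (Fin n)) = id := by
      funext q
      simp [swapOn]
    simp [this, mapMatrix_id]
  | cons i l ih =>
    rw [List.nodup_cons] at hl
    rw [List.map_cons, List.prod_cons, ih hl.2, qubitSwap_eq_mapMatrix, mapMatrix_mul]
    congr 1
    funext q
    ext j <;> by_cases hj : j = i <;> simp [swapOn, hj, hl.1]

lemma prod_qubitSwap_finRange (n : ℕ) :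
    ((List.finRange n).reverse.map (qubitSwap n)).prod = regSwap n := by
  rw [prod_qubitSwap _ (List.nodup_reverse.2 (List.nodup_finRange n)), regSwap_eq_mapMatrix]
  congr 1
  funext q
  ext j <;> simp [swapOn]

lemma regSwap_mem_unitary (n : ℕ) :
    regSwap n ∈ unitaryGroup ((Fin n → Fin 2) × (Fin n → Fin 2)) ℂ := by
  rw [regSwap_eq_mapMatrix]
  exact mapMatrix_mem_unitary Prod.swap_swap

lemma regSwap_conj {n : ℕ} (A B : QOp n) :
    regSwap n * (A ⊗ₖ B) * regSwap n = B ⊗ₖ A := by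
  ext ⟨a, c⟩ ⟨b, d⟩
  have hl : ∀ (M : DOp n) p q, (regSwap n * M) p q = M p.swap q := by
    intro M p q
    have : ∀ x : (Fin n → Fin 2) × (Fin n → Fin 2), p = x.swap ↔ p.swap = x := fun x =>
      ⟨fun h => by rw [h, Prod.swap_swap], fun h => by rw [← h, Prod.swap_swap]⟩
    simp [regSwap_eq_mapMatrix, mapMatrix, mul_apply, this]
  rw [mul_assoc, hl]
  simp [regSwap_eq_mapMatrix, mapMatrix, mul_apply, mul_comm]

lemma prod_conj {R ι : Type*} [Monoid R] {C D : R} (hDC : D * C = 1) (hCD : C * D = 1)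
    (f : ι → R) (l : List ι) :
    (l.map fun i => C * f i * D).prod = C * (l.map f).prod * D := by
  induction l with
  | nil => simp [hCD]
  | cons i l ih =>
    simp only [List.map_cons, List.prod_cons, ih]
    calc C * f i * D * (C * (l.map f).prod * D)
        = C * f i * (D * C) * (l.map f).prod * D := by simp only [mul_assoc]
      _ = C * (f i * (l.map f).prod) * D := by rw [hDC, mul_one, mul_assoc C]

/-- **Error bound on direct Heisenberg sewing.** Suppose each learned operator `Ô_{i,P}`
satisfies `Σ_{P∈{X,Y,Z}} ‖Ô_{i,P} − U† Pᵢ U‖∞ ≤ εᵢ`, let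
`W̃ᵢ = (1/2) I⊗I + (1/2) Σ_P Pᵢ ⊗ Ô_{i,P}` on the doubled system, and let `Wᵢ` be any
unitary minimizing the operator-norm distance to `W̃ᵢ`. Then
`‖S · Wₙ ⋯ W₁ − U† ⊗ U‖∞ ≤ Σᵢ εᵢ`. -/
theorem direct_heisenberg_sewing_error_bound (n : ℕ) (U : QOp n)
    (hU : U ∈ Matrix.unitaryGroup (Fin n → Fin 2) ℂ)
    (O : Fin n → Fin 3 → QOp n) (ε : Fin n → ℝ) (hε : ∀ i, 0 ≤ ε i)
    (hO : ∀ i, ∑ p : Fin 3, opNorm (O i p - Uᴴ * localOp (pauli p) i * U) ≤ ε i)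
    (W : Fin n → DOp n)
    (hW : ∀ i, W i ∈ Matrix.unitaryGroup ((Fin n → Fin 2) × (Fin n → Fin 2)) ℂ)
    (hWmin : ∀ i, ∀ B ∈ Matrix.unitaryGroup ((Fin n → Fin 2) × (Fin n → Fin 2)) ℂ,
      opNorm (W i
          - ((1 / 2 : ℂ) • ((1 : QOp n) ⊗ₖ (1 : QOp n))
              + (1 / 2 : ℂ) • ∑ p : Fin 3, (localOp (pauli p) i) ⊗ₖ (O i p)))
        ≤ opNorm (B
          - ((1 / 2 : ℂ) • ((1 : QOp n) ⊗ₖ (1 : QOp n))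
              + (1 / 2 : ℂ) • ∑ p : Fin 3, (localOp (pauli p) i) ⊗ₖ (O i p)))) :
    opNorm (regSwap n * ((List.finRange n).reverse.map W).prod - Uᴴ ⊗ₖ U)
      ≤ ∑ i, ε i := by
  simp only [opNorm_eq_norm] at *
  have hUU : Uᴴ * U = 1 := (mem_unitaryGroup_iff').1 hU
  have hUU' : U * Uᴴ = 1 := (mem_unitaryGroup_iff).1 hU
  set C : DOp n := (1 : QOp n) ⊗ₖ Uᴴ with hC
  set D : DOp n := (1 : QOp n) ⊗ₖ U with hD
  have hDC : D * C = 1 := by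
    rw [hC, hD, ← mul_kronecker_mul, hUU', one_mul, one_kronecker_one]
  have hCD : C * D = 1 := by
    rw [hC, hD, ← mul_kronecker_mul, hUU, one_mul, one_kronecker_one]
  have hDu : D ∈ unitaryGroup _ ℂ := kronecker_mem_unitary (one_mem _) hU
  have hCu : C ∈ unitaryGroup _ ℂ := kronecker_mem_unitary (one_mem _) (Unitary.star_mem hU)
  let V : Fin n → DOp n := fun i => C * qubitSwap n i * D
  have hV : ∀ i, V i ∈ unitaryGroup _ ℂ := by
    intro i
    have : qubitSwap n i ∈ unitaryGroup _ ℂ := by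
      rw [qubitSwap_eq_mapMatrix]
      exact mapMatrix_mem_unitary (swapOn_involutive _)
    exact mul_mem (mul_mem hCu this) hDu
  have hVeq : ∀ i, V i = (1 / 2 : ℂ) • ((1 : QOp n) ⊗ₖ (1 : QOp n))
      + (1 / 2 : ℂ) • ∑ p : Fin 3,
        localOp (pauli p) i ⊗ₖ (Uᴴ * localOp (pauli p) i * U) := by
    intro i
    simp only [V, qubitSwap_eq, mul_add, add_mul, mul_smul_comm, smul_mul_assoc,
      Finset.mul_sum, Finset.sum_mul, hC, hD, ← mul_kronecker_mul, one_mul, mul_one, hUU]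
  have hWV : ∀ i, ‖W i - V i‖ ≤ ε i := by
    intro i
    have hmin := hWmin i (V i) (hV i)
    set T : DOp n := (1 / 2 : ℂ) • ((1 : QOp n) ⊗ₖ (1 : QOp n))
      + (1 / 2 : ℂ) • ∑ p : Fin 3, (localOp (pauli p) i) ⊗ₖ (O i p) with hT
    have hdiff : T - V i = (1 / 2 : ℂ) • ∑ p : Fin 3,
        localOp (pauli p) i ⊗ₖ (O i p - Uᴴ * localOp (pauli p) i * U) := by
      have hsub : ∀ A B B' : QOp n, A ⊗ₖ (B - B') = A ⊗ₖ B - A ⊗ₖ B' := by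
        intro A B B'
        ext p q
        simp [mul_sub]
      rw [hVeq, hT, add_sub_add_left_eq_sub, ← smul_sub, ← Finset.sum_sub_distrib]
      simp only [hsub]
    have hTV : ‖T - V i‖ ≤ ε i / 2 := by
      rw [hdiff, norm_smul]
      have h1 := (norm_sum_le (Finset.univ : Finset (Fin 3)) fun p =>
        localOp (pauli p) i ⊗ₖ (O i p - Uᴴ * localOp (pauli p) i * U)).trans
        (Finset.sum_le_sum fun p _ =>
          norm_kronecker_le_of_unitary (localOp_mem_unitary (pauli_mem_unitary p) i) _)
      have h2 := h1.trans (hO i)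
      have h3 : ‖(1 / 2 : ℂ)‖ = 1 / 2 := by norm_num
      rw [h3]
      linarith
    have htri := norm_sub_le_norm_sub_add_norm_sub (W i) T (V i)
    rw [norm_sub_rev (V i) T] at hmin
    linarith
  have htarget : Uᴴ ⊗ₖ U = regSwap n * ((List.finRange n).reverse.map V).prod := by
    rw [show ((List.finRange n).reverse.map V).prod = C * regSwap n * D by
      rw [← prod_qubitSwap_finRange]
      exact prod_conj hDC hCD _ _]
    rw [← mul_assoc, ← mul_assoc, hC, regSwap_conj, hD, ← mul_kronecker_mul, one_mul, mul_one]
  rw [htarget, ← mul_sub, CStarRing.norm_mem_unitary_mul _ (regSwap_mem_unitary n)]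
  refine (norm_prod_sub_prod_le W V ε hW hV hWV _).trans_eq ?_
  rw [List.map_reverse, List.sum_reverse, ← List.ofFn_eq_map, List.sum_ofFn]
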